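/- arXiv:2504.08317 — 3 statements merged into one kernel-verified Lean document; each statement's English description precedes it below -/
import Mathlib

section
/- Let (F, ‖·‖) be a normed real vector space, and let {Jⁿ}_{n∈ℕ} and J be linear maps from F into L¹(Ω) for a probability space (Ω, 𝔉, ℙ). Assume there is a constant C > 0 such that sup_{n≥1} E[|Jⁿ(f)|] ≤ C‖f‖ and E[|J(f)|] ≤ C‖f‖ for every f ∈ F, and assume there is a subset D ⊂ F, dense with respect to ‖·‖, such that for every f ∈ D the random variables Jⁿ(f) converge in distribution to J(f) as n → ∞. Then for every f ∈ F, Jⁿ(f) converges in distribution to J(f) as n → ∞. -/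
open MeasureTheory Filter Topology

lemma aux_bound {Ω : Type*} [MeasurableSpace Ω] (ℙ : Measure Ω) [IsProbabilityMeasure ℙ]
    {F : Type*} [NormedAddCommGroup F] [NormedSpace ℝ F]
    (T : F →ₗ[ℝ] Lp ℝ 1 ℙ) (C : ℝ)
    (hT : ∀ f : F, ∫ ω, |(T f : Ω → ℝ) ω| ∂ℙ ≤ C * ‖f‖)
    (g : BoundedContinuousFunction ℝ ℝ) (L : NNReal) (hg : LipschitzWith L g) (f h : F) :
    |∫ ω, g ((T f : Ω → ℝ) ω) ∂ℙ - ∫ ω, g ((T h : Ω → ℝ) ω) ∂ℙ| ≤ L * (C * ‖f - h‖) := by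
  have hi : ∀ u : F, Integrable (fun ω => g ((T u : Ω → ℝ) ω)) ℙ := fun u =>
    Integrable.of_bound
      (g.continuous.comp_aestronglyMeasurable (Lp.aestronglyMeasurable (T u))) ‖g‖
      (ae_of_all _ fun ω => g.norm_coe_le_norm _)
  have hint : Integrable (fun ω => |(T (f - h) : Ω → ℝ) ω|) ℙ :=
    (L1.integrable_coeFn (T (f - h))).abs
  rw [← integral_sub (hi f) (hi h)]
  calc |∫ ω, (g ((T f : Ω → ℝ) ω) - g ((T h : Ω → ℝ) ω)) ∂ℙ|
      ≤ ∫ ω, |g ((T f : Ω → ℝ) ω) - g ((T h : Ω → ℝ) ω)| ∂ℙ := abs_integral_le_integral_abs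
    _ ≤ ∫ ω, L * |(T (f - h) : Ω → ℝ) ω| ∂ℙ := by
        refine integral_mono_ae ((hi f).sub (hi h)).abs (hint.const_mul _) ?_
        rw [map_sub]
        filter_upwards [Lp.coeFn_sub (T f) (T h)] with ω hω
        rw [hω]
        simpa [Real.dist_eq] using hg.dist_le_mul ((T f : Ω → ℝ) ω) ((T h : Ω → ℝ) ω)
    _ = L * ∫ ω, |(T (f - h) : Ω → ℝ) ω| ∂ℙ := integral_const_mul _ _
    _ ≤ _ := by gcongr; exact hT _

/-- If `Jⁿ, J` are linear maps from a normed space `F` into `L¹(Ω)` with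
uniformly bounded expectations `E[|Jⁿ f|] ≤ C‖f‖`, `E[|J f|] ≤ C‖f‖`, and `Jⁿ f → J f`
in distribution for `f` in a dense subset `D ⊆ F`, then `Jⁿ f → J f` in distribution
for every `f ∈ F`.  Convergence in distribution is phrased via bounded continuous
test functions. -/
theorem stmt0 {Ω : Type*} [MeasurableSpace Ω] (ℙ : Measure Ω) [IsProbabilityMeasure ℙ]
    {F : Type*} [NormedAddCommGroup F] [NormedSpace ℝ F]
    (J : ℕ → F →ₗ[ℝ] Lp ℝ 1 ℙ) (Jlim : F →ₗ[ℝ] Lp ℝ 1 ℙ)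
    (C : ℝ) (hC : 0 < C)
    (hJbound : ∀ (n : ℕ) (f : F), ∫ ω, |(J n f : Ω → ℝ) ω| ∂ℙ ≤ C * ‖f‖)
    (hJlimbound : ∀ f : F, ∫ ω, |(Jlim f : Ω → ℝ) ω| ∂ℙ ≤ C * ‖f‖)
    (D : Set F) (hD : Dense D)
    (hconv : ∀ f ∈ D, ∀ g : BoundedContinuousFunction ℝ ℝ,
      Tendsto (fun n => ∫ ω, g ((J n f : Ω → ℝ) ω) ∂ℙ) atTop
        (𝓝 (∫ ω, g ((Jlim f : Ω → ℝ) ω) ∂ℙ))) :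
    ∀ f : F, ∀ g : BoundedContinuousFunction ℝ ℝ,
      Tendsto (fun n => ∫ ω, g ((J n f : Ω → ℝ) ω) ∂ℙ) atTop
        (𝓝 (∫ ω, g ((Jlim f : Ω → ℝ) ω) ∂ℙ)) := by
  intro f
  have key : ∀ g : BoundedContinuousFunction ℝ ℝ, (∃ L, LipschitzWith L g) →
      Tendsto (fun n => ∫ ω, g ((J n f : Ω → ℝ) ω) ∂ℙ) atTop
        (𝓝 (∫ ω, g ((Jlim f : Ω → ℝ) ω) ∂ℙ)) := by
    rintro g ⟨L, hL⟩
    rw [Metric.tendsto_atTop]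
    intro ε hε
    obtain ⟨h, hhD, hh⟩ := hD.exists_dist_lt f
      (ε := ε / (3 * (L * C + 1))) (by positivity)
    have hsmall : L * (C * ‖f - h‖) < ε / 3 := by
      rw [dist_eq_norm, lt_div_iff₀ (by positivity)] at hh
      nlinarith [norm_nonneg (f - h), hC, L.2, hε]
    obtain ⟨N, hN⟩ := (Metric.tendsto_atTop.1 (hconv h hhD g)) (ε / 3) (by positivity)
    refine ⟨N, fun n hn => ?_⟩
    have h1 := aux_bound ℙ (J n) C (hJbound n) g L hL f h
    have h2 := aux_bound ℙ Jlim C hJlimbound g L hL f h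
    have h3 := hN n hn
    rw [Real.dist_eq] at h3 ⊢
    rw [abs_le] at h1 h2
    rw [abs_lt] at h3 ⊢
    constructor <;> linarith
  have hm : ∀ u : Lp ℝ 1 ℙ, AEMeasurable (u : Ω → ℝ) ℙ := fun u =>
    (Lp.aestronglyMeasurable u).aemeasurable
  let μ : ℕ → ProbabilityMeasure ℝ := fun n =>
    ⟨ℙ.map (J n f : Ω → ℝ), Measure.isProbabilityMeasure_map (hm _)⟩
  let ν : ProbabilityMeasure ℝ :=
    ⟨ℙ.map (Jlim f : Ω → ℝ), Measure.isProbabilityMeasure_map (hm _)⟩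
  have hmap : ∀ (u : Lp ℝ 1 ℙ) (g : ℝ → ℝ), Continuous g →
      ∫ x, g x ∂(ℙ.map (u : Ω → ℝ)) = ∫ ω, g ((u : Ω → ℝ) ω) ∂ℙ := fun u g hg =>
    integral_map (hm u) hg.aestronglyMeasurable
  have hμ : Tendsto μ atTop (𝓝 ν) := by
    rw [tendsto_iff_forall_lipschitz_integral_tendsto]
    rintro g ⟨K, hK⟩ ⟨L, hL⟩
    have := key ⟨⟨g, hL.continuous⟩, K, hK⟩ ⟨L, hL⟩
    simpa [μ, ν, hmap _ g hL.continuous] using this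
  intro g
  have := (ProbabilityMeasure.tendsto_iff_forall_integral_tendsto.1 hμ) g
  simpa [μ, ν, hmap _ g g.continuous] using this
end

section
/- For every real α > 2 there exist constants β > 0 and C > 0 such that for all x, z ∈ [0,1]², (∫_{[0,1]²} | log|x − y| − log|z − y| |^α dy)^{1/α} ≤ C |x − z|^β. Moreover, one may take β = (α − ε)/α for any ε with α − 2/p < ε < α, where p > 1 is any exponent with α − 2/p > 0. -/
open MeasureTheory

lemma log_aux {a b d θ : ℝ} (ha : 0 < a) (hab : a ≤ b) (hd : b - a ≤ d) (h0 : 0 < θ) (h1 : θ ≤ 1) :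
    Real.log b - Real.log a ≤ θ⁻¹ * (d ^ θ * a ^ (-θ)) := by
  have hb : 0 < b := ha.trans_le hab
  have hd0 : 0 ≤ d := by linarith
  have e1 : (b / a) ^ θ ≤ 1 + (d / a) ^ θ := by
    have : b / a ≤ 1 + d / a := by
      rw [div_le_iff₀ ha, add_mul, div_mul_cancel₀ _ ha.ne']; linarith
    calc (b / a) ^ θ ≤ (1 + d / a) ^ θ := Real.rpow_le_rpow (by positivity) this h0.le
      _ ≤ 1 ^ θ + (d / a) ^ θ := Real.rpow_add_le_add_rpow (by positivity) (by positivity) h0.le h1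
      _ = _ := by simp
  have e2 := Real.log_le_sub_one_of_pos (show 0 < (b / a) ^ θ by positivity)
  rw [Real.log_rpow (by positivity), Real.log_div hb.ne' ha.ne'] at e2
  rw [Real.div_rpow hd0 ha.le] at e1
  rw [Real.rpow_neg ha.le, ← div_eq_mul_inv, inv_mul_eq_div, le_div_iff₀ h0]
  linarith

lemma log_aux2 {a b d θ α : ℝ} (ha : 0 < a) (hb : 0 < b) (hd : |a - b| ≤ d) (h0 : 0 < θ) (h1 : θ ≤ 1)
    (hα : 0 < α) :
    |Real.log a - Real.log b| ^ α ≤ (θ⁻¹) ^ α * d ^ (θ * α) * (a ^ (-(θ * α)) + b ^ (-(θ * α))) := by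
  wlog hab : a ≤ b generalizing a b
  · have := this hb ha (by rwa [abs_sub_comm]) (by linarith)
    rwa [abs_sub_comm, add_comm (a ^ _)]
  have hd' : b - a ≤ d := by rw [abs_sub_comm] at hd; exact (le_abs_self _).trans hd
  have hd0 : 0 ≤ d := (abs_nonneg _).trans hd
  have h := log_aux ha hab hd' h0 h1
  have hl : Real.log a ≤ Real.log b := Real.log_le_log ha hab
  rw [abs_sub_comm, abs_of_nonneg (by linarith)]
  have h2 := Real.rpow_le_rpow (by linarith) h hα.le
  rw [Real.mul_rpow (by positivity) (by positivity), Real.mul_rpow (by positivity) (by positivity),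
    ← Real.rpow_mul hd0, ← Real.rpow_mul ha.le, ← mul_assoc, neg_mul] at h2
  refine h2.trans ?_
  gcongr
  have : 0 ≤ b ^ (-(θ * α)) := by positivity
  linarith

lemma prod_aux {u v γ : ℝ} (hu : u ≠ 0) (hv : v ≠ 0) (hγ : 0 < γ) :
    Real.sqrt (u ^ 2 + v ^ 2) ^ (-γ) ≤ |u| ^ (-(γ / 2)) * |v| ^ (-(γ / 2)) := by
  have hu' := abs_pos.2 hu
  have hv' := abs_pos.2 hv
  rw [← Real.mul_rpow hu'.le hv'.le, Real.sqrt_eq_rpow, ← Real.rpow_mul (by positivity)]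
  rw [show 1 / 2 * -γ = -(γ / 2) by ring]
  apply Real.rpow_le_rpow_of_nonpos (by positivity) _ (by linarith)
  rw [← sq_abs u, ← sq_abs v]
  nlinarith [sq_nonneg (|u| - |v|)]

lemma tri_aux (x y z : Fin 2 → ℝ) :
    |Real.sqrt (∑ i, (x i - y i) ^ 2) - Real.sqrt (∑ i, (z i - y i) ^ 2)| ≤
      Real.sqrt (∑ i, (x i - z i) ^ 2) := by
  have h := abs_dist_sub_le (WithLp.toLp 2 x) (WithLp.toLp 2 z) (WithLp.toLp 2 y)
  simpa [EuclideanSpace.dist_eq, Real.dist_eq, sq_abs] using h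

lemma int_aux {δ : ℝ} (h1 : δ < 1) :
    ∃ A : ENNReal, A ≠ ⊤ ∧ ∀ c ∈ Set.Icc (0:ℝ) 1,
      ∫⁻ t in Set.Icc (0:ℝ) 1, ENNReal.ofReal (|c - t| ^ (-δ)) ≤ A := by
  have I0 : IntegrableOn (fun t : ℝ => |t| ^ (-δ)) (Set.Icc 0 1) := by
    have := (intervalIntegral.intervalIntegrable_rpow' (a := 0) (b := 1) (r := -δ) (by linarith))
    rw [intervalIntegrable_iff_integrableOn_Icc_of_le zero_le_one] at this
    refine this.congr_fun (fun t ht => ?_) measurableSet_Icc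
    simp [abs_of_nonneg ht.1]
  have I1 : IntegrableOn (fun t : ℝ => |t| ^ (-δ)) (Set.Icc (-1) 0) := by
    have := I0.comp_neg
    simpa using this
  have I : IntegrableOn (fun t : ℝ => |t| ^ (-δ)) (Set.Icc (-1) 1) := by
    rw [← Set.Icc_union_Icc_eq_Icc (b := (0:ℝ)) (by norm_num) (by norm_num)]
    exact I1.union I0
  refine ⟨∫⁻ t in Set.Icc (-1:ℝ) 1, ENNReal.ofReal (|t| ^ (-δ)), I.lintegral_lt_top.ne, fun c hc => ?_⟩
  rw [← lintegral_indicator measurableSet_Icc, ← lintegral_indicator measurableSet_Icc,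
    ← lintegral_sub_left_eq_self ((Set.Icc (-1:ℝ) 1).indicator _) c]
  refine lintegral_mono fun t => ?_
  by_cases ht : t ∈ Set.Icc (0:ℝ) 1
  · rw [Set.indicator_of_mem ht, Set.indicator_of_mem]
    exact ⟨by linarith [hc.1, ht.2], by linarith [hc.2, ht.1]⟩
  · rw [Set.indicator_of_notMem ht]; exact zero_le

lemma int2_aux {δ : ℝ} (h1 : δ < 1) :
    ∃ A : ENNReal, A ≠ ⊤ ∧ ∀ x ∈ Set.Icc (0 : Fin 2 → ℝ) 1,
      ∫⁻ y in Set.Icc (0 : Fin 2 → ℝ) 1, ∏ i, ENNReal.ofReal (|x i - y i| ^ (-δ)) ≤ A := by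
  obtain ⟨A, hA, h⟩ := int_aux h1
  refine ⟨A ^ 2, ENNReal.pow_ne_top hA, fun x hx => ?_⟩
  rw [← Set.pi_univ_Icc, volume_pi, Measure.restrict_pi_pi]
  have hm := measurePreserving_piFinTwo
    (fun i : Fin 2 => (volume : Measure ℝ).restrict (Set.Icc ((0 : Fin 2 → ℝ) i) ((1 : Fin 2 → ℝ) i)))
  have e := hm.lintegral_comp (f := fun q : ℝ × ℝ => ENNReal.ofReal (|x 0 - q.1| ^ (-δ)) *
    ENNReal.ofReal (|x 1 - q.2| ^ (-δ))) (by fun_prop)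
  simp only [Fin.prod_univ_two]
  refine (le_of_eq e).trans ?_
  rw [lintegral_prod_mul (f := fun t => ENNReal.ofReal (|x 0 - t| ^ (-δ)))
    (g := fun t => ENNReal.ofReal (|x 1 - t| ^ (-δ))) (by fun_prop) (by fun_prop), sq]
  exact mul_le_mul' (h _ ⟨hx.1 0, hx.2 0⟩) (h _ ⟨hx.1 1, hx.2 1⟩)

lemma ae_aux (x : Fin 2 → ℝ) : ∀ᵐ y : Fin 2 → ℝ, ∀ i, x i - y i ≠ 0 := by
  rw [ae_all_iff]
  intro i
  have := (Measure.quasiMeasurePreserving_eval (fun _ : Fin 2 => (volume : Measure ℝ)) i).ae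
    (Measure.ae_ne volume (x i))
  filter_upwards [this] with y hy h
  exact hy (by simpa using (sub_eq_zero.1 h).symm)

lemma main_aux {α γ : ℝ} (hα : 2 < α) (h0 : 0 < γ) (h2 : γ < 2) :
    ∃ C : ℝ, 0 < C ∧
        ∀ x ∈ Set.Icc (0 : Fin 2 → ℝ) 1, ∀ z ∈ Set.Icc (0 : Fin 2 → ℝ) 1,
          eLpNorm (fun y : Fin 2 → ℝ =>
              Real.log (Real.sqrt (∑ i, (x i - y i) ^ 2)) -
                Real.log (Real.sqrt (∑ i, (z i - y i) ^ 2)))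
            (ENNReal.ofReal α) (volume.restrict (Set.Icc (0 : Fin 2 → ℝ) 1))
          ≤ ENNReal.ofReal (C * Real.sqrt (∑ i, (x i - z i) ^ 2) ^ (γ / α)) := by
  have hα0 : 0 < α := by linarith
  obtain ⟨A, hA, hI⟩ := int2_aux (δ := γ / 2) (by linarith)
  set θ := γ / α with hθ
  have hθ0 : 0 < θ := by positivity
  have hθ1 : θ ≤ 1 := by rw [hθ, div_le_one hα0]; linarith
  have hθα : θ * α = γ := div_mul_cancel₀ _ hα0.ne'
  refine ⟨θ⁻¹ * (2 * A.toReal + 1) ^ (1 / α), by positivity, fun x hx z hz => ?_⟩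
  set d := Real.sqrt (∑ i, (x i - z i) ^ 2) with hd
  have hd0 : 0 ≤ d := Real.sqrt_nonneg _
  rw [eLpNorm_eq_lintegral_rpow_enorm_toReal (by simpa using hα0) ENNReal.ofReal_ne_top,
    ENNReal.toReal_ofReal hα0.le]
  have key : ∫⁻ y in Set.Icc (0 : Fin 2 → ℝ) 1, ‖Real.log (Real.sqrt (∑ i, (x i - y i) ^ 2)) -
                Real.log (Real.sqrt (∑ i, (z i - y i) ^ 2))‖ₑ ^ α ≤
      ENNReal.ofReal (θ⁻¹ ^ α * d ^ γ * (2 * A.toReal + 1)) := by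
    calc _ ≤ ∫⁻ y in Set.Icc (0 : Fin 2 → ℝ) 1, ENNReal.ofReal (θ⁻¹ ^ α * d ^ γ) *
          (∏ i, ENNReal.ofReal (|x i - y i| ^ (-(γ / 2))) +
            ∏ i, ENNReal.ofReal (|z i - y i| ^ (-(γ / 2)))) := by
          refine lintegral_mono_ae (ae_restrict_of_ae ?_)
          filter_upwards [ae_aux x, ae_aux z] with y hxy hzy
          have pos : ∀ w : Fin 2 → ℝ, (∀ i, w i - y i ≠ 0) →
              0 < Real.sqrt (∑ i, (w i - y i) ^ 2) := by
            intro w hw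
            have := hw 0
            rw [Fin.sum_univ_two]
            positivity
          have pr : ∀ w : Fin 2 → ℝ, (∀ i, w i - y i ≠ 0) →
              Real.sqrt (∑ i, (w i - y i) ^ 2) ^ (-γ) ≤
                |w 0 - y 0| ^ (-(γ / 2)) * |w 1 - y 1| ^ (-(γ / 2)) := by
            intro w hw
            rw [Fin.sum_univ_two]
            exact prod_aux (hw 0) (hw 1) h0
          have h := log_aux2 (pos x hxy) (pos z hzy) (tri_aux x y z) hθ0 hθ1 hα0
          rw [hθα] at h
          rw [Real.enorm_eq_ofReal_abs, ENNReal.ofReal_rpow_of_nonneg (abs_nonneg _) hα0.le]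
          simp only [Fin.prod_univ_two]
          rw [← ENNReal.ofReal_mul (by positivity), ← ENNReal.ofReal_mul (by positivity),
            ← ENNReal.ofReal_add (by positivity) (by positivity),
            ← ENNReal.ofReal_mul (by positivity)]
          apply ENNReal.ofReal_le_ofReal
          refine h.trans ?_
          gcongr
          · exact pr x hxy
          · exact pr z hzy
      _ ≤ ENNReal.ofReal (θ⁻¹ ^ α * d ^ γ) * (A + A) := by
          rw [lintegral_const_mul _ (by fun_prop), lintegral_add_left (by fun_prop)]
          gcongr
          · exact hI x hx
          · exact hI z hz
      _ ≤ _ := by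
          rw [ENNReal.ofReal_mul (p := θ⁻¹ ^ α * d ^ γ) (by positivity)]
          gcongr
          conv_lhs => rw [← ENNReal.ofReal_toReal hA]
          rw [← ENNReal.ofReal_add (by positivity) (by positivity)]
          apply ENNReal.ofReal_le_ofReal
          linarith
  refine (ENNReal.rpow_le_rpow key (by positivity)).trans ?_
  rw [ENNReal.ofReal_rpow_of_nonneg (by positivity) (by positivity)]
  apply ENNReal.ofReal_le_ofReal
  rw [Real.mul_rpow (by positivity) (by positivity), Real.mul_rpow (by positivity) (by positivity),
    ← Real.rpow_mul (by positivity), ← Real.rpow_mul hd0, mul_one_div_cancel hα0.ne', Real.rpow_one,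
    mul_one_div, ← hθ]
  apply le_of_eq; ring

/-- For every `α > 2` the free-space Green kernel of the Laplacian in
dimension 2 is Hölder continuous from `[0,1]²` into `L^α([0,1]²)`: there are `β, C > 0`
with `‖log|x − ·| − log|z − ·|‖_{L^α([0,1]²)} ≤ C |x − z|^β`; moreover one may take
`β = (α − ε)/α` for any `ε` with `α − 2/p < ε < α`, `p > 1`, `α − 2/p > 0`. -/
theorem stmt6 (α : ℝ) (hα : 2 < α) :
    (∃ β : ℝ, 0 < β ∧ ∃ C : ℝ, 0 < C ∧
      ∀ x ∈ Set.Icc (0 : Fin 2 → ℝ) 1, ∀ z ∈ Set.Icc (0 : Fin 2 → ℝ) 1,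
        eLpNorm (fun y : Fin 2 → ℝ =>
            Real.log (Real.sqrt (∑ i, (x i - y i) ^ 2)) -
              Real.log (Real.sqrt (∑ i, (z i - y i) ^ 2)))
          (ENNReal.ofReal α) (volume.restrict (Set.Icc (0 : Fin 2 → ℝ) 1))
        ≤ ENNReal.ofReal (C * Real.sqrt (∑ i, (x i - z i) ^ 2) ^ β)) ∧
    (∀ p : ℝ, 1 < p → 0 < α - 2 / p → ∀ ε : ℝ, α - 2 / p < ε → ε < α →
      ∃ C : ℝ, 0 < C ∧
        ∀ x ∈ Set.Icc (0 : Fin 2 → ℝ) 1, ∀ z ∈ Set.Icc (0 : Fin 2 → ℝ) 1,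
          eLpNorm (fun y : Fin 2 → ℝ =>
              Real.log (Real.sqrt (∑ i, (x i - y i) ^ 2)) -
                Real.log (Real.sqrt (∑ i, (z i - y i) ^ 2)))
            (ENNReal.ofReal α) (volume.restrict (Set.Icc (0 : Fin 2 → ℝ) 1))
          ≤ ENNReal.ofReal (C * Real.sqrt (∑ i, (x i - z i) ^ 2) ^ ((α - ε) / α))) := by
  refine ⟨⟨1 / α, by positivity, main_aux hα one_pos one_lt_two⟩, ?_⟩
  intro p hp _ ε h1 h2
  refine main_aux hα (by linarith) ?_
  have : 2 / p < 2 := by rw [div_lt_iff₀ (by linarith)]; linarith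
  linarith
end

section
/- For every real α with 2 < α < 9/4 there exist constants β > 0 and C > 0 such that for all x, z ∈ [0,1]³, (∫_{[0,1]³} | |x − y|^{−1} − |z − y|^{−1} |^α dy)^{1/α} ≤ C |x − z|^β. -/
open MeasureTheory

lemma aux_pt_le {a b d : ℝ} (ha : 0 ≤ a) (hab : a ≤ b) (hd : b - a ≤ d) (hd0 : 0 ≤ d) :
    |a⁻¹ - b⁻¹| ≤ d ^ (1/4 : ℝ) * (a ^ (-(5/4) : ℝ) + b ^ (-(5/4) : ℝ)) := by
  have hb : 0 ≤ b := ha.trans hab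
  have e : ∀ t : ℝ, 0 < t → t ^ (-(5/4) : ℝ) = t⁻¹ * (t ^ (1/4 : ℝ))⁻¹ := by
    intro t ht
    rw [show (-(5/4) : ℝ) = -1 + -(1/4) by norm_num, Real.rpow_add ht, Real.rpow_neg_one,
      Real.rpow_neg ht.le]
  have key : ∀ t : ℝ, 0 < t → ∀ u : ℝ, 0 ≤ u → u ≤ 1 → u * t ≤ d →
      u * t⁻¹ ≤ d ^ (1/4 : ℝ) * t ^ (-(5/4) : ℝ) := by
    intro t ht u hu hu1 hud
    rw [e t ht]
    have h1 : u ≤ u ^ (1/4 : ℝ) := by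
      rcases hu.eq_or_lt with h | h
      · rw [← h]; simp
      · simpa using Real.rpow_le_rpow_of_exponent_ge h hu1 (show (1/4 : ℝ) ≤ 1 by norm_num)
    have h2 : (u * t) ^ (1/4 : ℝ) ≤ d ^ (1/4 : ℝ) :=
      Real.rpow_le_rpow (by positivity) hud (by norm_num)
    rw [Real.mul_rpow hu ht.le] at h2
    have ht4 : 0 < t ^ (1/4 : ℝ) := by positivity
    have h3 : u ≤ d ^ (1/4 : ℝ) * (t ^ (1/4 : ℝ))⁻¹ := by
      rw [← div_eq_mul_inv, le_div_iff₀ ht4]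
      exact (mul_le_mul_of_nonneg_right h1 ht4.le).trans h2
    calc u * t⁻¹ ≤ (d ^ (1/4 : ℝ) * (t ^ (1/4 : ℝ))⁻¹) * t⁻¹ :=
          mul_le_mul_of_nonneg_right h3 (by positivity)
      _ = _ := by ring
  rcases hb.eq_or_lt with h0 | hb0
  · have : a = 0 := by linarith
    subst this; rw [← h0]; simp
  rcases ha.eq_or_lt with h0 | ha0
  · rw [← h0] at hd ⊢
    have := key b hb0 1 (by norm_num) le_rfl (by linarith)
    rw [Real.zero_rpow (by norm_num)]
    simp only [inv_zero, zero_sub, abs_neg, zero_add]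
    rw [abs_of_pos (by positivity)]
    linarith
  · have h := key a ha0 ((b - a) / b) (div_nonneg (by linarith) hb)
      (by rw [div_le_one hb0]; linarith)
      (by
        rw [div_mul_eq_mul_div, div_le_iff₀ hb0]
        exact mul_le_mul hd hab ha hd0)
    have h' : |a⁻¹ - b⁻¹| = (b - a) / b * a⁻¹ := by
      rw [abs_of_nonneg (by
        rw [sub_nonneg]; exact inv_anti₀ ha0 hab)]
      field_simp
    rw [h', mul_add]
    have : 0 ≤ d ^ (1/4 : ℝ) * b ^ (-(5/4) : ℝ) := by positivity
    linarith

lemma aux_pt {a b d : ℝ} (ha : 0 ≤ a) (hb : 0 ≤ b) (hd : |a - b| ≤ d) :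
    |a⁻¹ - b⁻¹| ≤ d ^ (1/4 : ℝ) * (a ^ (-(5/4) : ℝ) + b ^ (-(5/4) : ℝ)) := by
  have hd0 := (abs_nonneg _).trans hd
  rcases le_total a b with h | h
  · exact aux_pt_le ha h (by rw [abs_sub_comm] at hd; exact (le_abs_self _).trans hd) hd0
  · rw [abs_sub_comm, add_comm]
    exact aux_pt_le hb h ((le_abs_self _).trans hd) hd0

lemma aux_tri (x y z : Fin 3 → ℝ) :
    |Real.sqrt (∑ i, (x i - y i) ^ 2) - Real.sqrt (∑ i, (z i - y i) ^ 2)| ≤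
      Real.sqrt (∑ i, (x i - z i) ^ 2) := by
  have e : ∀ u v : Fin 3 → ℝ, Real.sqrt (∑ i, (u i - v i) ^ 2) =
      ‖WithLp.toLp 2 u - WithLp.toLp 2 v‖ := by
    intro u v
    simp [EuclideanSpace.norm_eq]
  rw [e, e, e]
  refine (abs_norm_sub_norm_le _ _).trans (le_of_eq ?_)
  congr 1; abel

lemma aux_sup (x y : Fin 3 → ℝ) :
    (Real.sqrt (∑ i, (x i - y i) ^ 2)) ^ (-(5/4) : ℝ) ≤ ‖x - y‖ ^ (-(5/4) : ℝ) := by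
  rcases (norm_nonneg (x - y)).eq_or_lt with h | h
  · have : x = y := by
      rw [← sub_eq_zero, ← norm_eq_zero]; exact h.symm
    subst this
    simp
  · refine Real.rpow_le_rpow_of_nonpos h ?_ (by norm_num)
    rw [pi_norm_le_iff_of_nonneg (Real.sqrt_nonneg _)]
    intro i
    apply Real.le_sqrt_of_sq_le
    rw [Real.norm_eq_abs, sq_abs]
    exact Finset.single_le_sum (f := fun i => (x i - y i) ^ 2) (fun i _ => sq_nonneg _)
      (Finset.mem_univ i)

lemma aux_mem (α : ℝ) (hα₁ : 2 < α) (hα₂ : α < 9 / 4) :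
    MemLp (fun w : Fin 3 → ℝ => ‖w‖ ^ (-(5/4) : ℝ)) (ENNReal.ofReal α)
      (volume.restrict (Metric.ball 0 2)) := by
  have hm : Measurable (fun w : Fin 3 → ℝ => ‖w‖ ^ (-(5/4) : ℝ)) := by fun_prop
  rw [← integrable_norm_rpow_iff hm.aestronglyMeasurable
    (by simp; linarith) ENNReal.ofReal_ne_top, ENNReal.toReal_ofReal (by linarith)]
  refine integrableOn_ball_of_norm_le_rpow (C := 1) (α := 5/4 * α) (by simp)
    (by simp; linarith) (Filter.Eventually.of_forall fun w => ?_)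
    ((hm.norm.pow_const α).aestronglyMeasurable)
  have h0 : 0 ≤ ‖w‖ ^ (-(5/4) : ℝ) := by positivity
  rw [Real.norm_of_nonneg h0, ← Real.rpow_mul (norm_nonneg w), Real.norm_of_nonneg (by positivity),
    one_mul]
  apply le_of_eq; congr 1; ring

lemma aux_norm (p : ENNReal) (x : Fin 3 → ℝ) (hx : x ∈ Set.Icc (0 : Fin 3 → ℝ) 1) :
    eLpNorm (fun y => ‖x - y‖ ^ (-(5/4) : ℝ)) p (volume.restrict (Set.Icc (0 : Fin 3 → ℝ) 1)) ≤
    eLpNorm (fun w : Fin 3 → ℝ => ‖w‖ ^ (-(5/4) : ℝ)) p (volume.restrict (Metric.ball 0 2)) := by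
  have hm : Measurable (fun w : Fin 3 → ℝ => ‖w‖ ^ (-(5/4) : ℝ)) := by fun_prop
  have mp := (Measure.measurePreserving_sub_left (volume : Measure (Fin 3 → ℝ)) x).restrict_preimage
    (s := Metric.ball 0 2) measurableSet_ball
  rw [← eLpNorm_comp_measurePreserving hm.aestronglyMeasurable mp]
  refine eLpNorm_mono_measure _ (Measure.restrict_mono (fun y hy => ?_) le_rfl)
  simp only [Set.mem_preimage, mem_ball_zero_iff]
  refine lt_of_le_of_lt ((pi_norm_le_iff_of_nonneg zero_le_one).2 fun i => ?_) one_lt_two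
  have h1 := hx.1 i
  have h2 := hx.2 i
  have h3 := hy.1 i
  have h4 := hy.2 i
  simp only [Pi.zero_apply, Pi.one_apply] at h1 h2 h3 h4
  rw [Pi.sub_apply, Real.norm_eq_abs, abs_le]
  constructor <;> linarith

/-- For every `2 < α < 9/4` the free-space Green kernel of the Laplacian
in dimension 3 is Hölder continuous from `[0,1]³` into `L^α([0,1]³)`: there are
`β, C > 0` with `‖|x − ·|⁻¹ − |z − ·|⁻¹‖_{L^α([0,1]³)} ≤ C |x − z|^β`. -/
theorem stmt7 (α : ℝ) (hα₁ : 2 < α) (hα₂ : α < 9 / 4) :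
    ∃ β : ℝ, 0 < β ∧ ∃ C : ℝ, 0 < C ∧
      ∀ x ∈ Set.Icc (0 : Fin 3 → ℝ) 1, ∀ z ∈ Set.Icc (0 : Fin 3 → ℝ) 1,
        eLpNorm (fun y : Fin 3 → ℝ =>
            (Real.sqrt (∑ i, (x i - y i) ^ 2))⁻¹ - (Real.sqrt (∑ i, (z i - y i) ^ 2))⁻¹)
          (ENNReal.ofReal α) (volume.restrict (Set.Icc (0 : Fin 3 → ℝ) 1))
        ≤ ENNReal.ofReal (C * Real.sqrt (∑ i, (x i - z i) ^ 2) ^ β) := by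
  have hM := (aux_mem α hα₁ hα₂).2
  set M := eLpNorm (fun w : Fin 3 → ℝ => ‖w‖ ^ (-(5/4) : ℝ)) (ENNReal.ofReal α)
      (volume.restrict (Metric.ball 0 2)) with hMdef
  refine ⟨1/4, by norm_num, 2 * M.toReal + 1, by positivity, fun x hx z hz => ?_⟩
  set D := Real.sqrt (∑ i, (x i - z i) ^ 2) ^ (1/4 : ℝ) with hD
  have hD0 : 0 ≤ D := by positivity
  have hm : ∀ v : Fin 3 → ℝ, Measurable (fun w : Fin 3 → ℝ => ‖v - w‖ ^ (-(5/4) : ℝ)) := by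
    intro v; fun_prop
  calc _ ≤ eLpNorm (D • ((fun y => ‖x - y‖ ^ (-(5/4) : ℝ)) + (fun y => ‖z - y‖ ^ (-(5/4) : ℝ))))
        (ENNReal.ofReal α) (volume.restrict (Set.Icc (0 : Fin 3 → ℝ) 1)) := by
        refine eLpNorm_mono_real fun y => ?_
        rw [Real.norm_eq_abs]
        refine (aux_pt (Real.sqrt_nonneg _) (Real.sqrt_nonneg _) (aux_tri x y z)).trans ?_
        simp only [Pi.smul_apply, Pi.add_apply, smul_eq_mul]
        exact mul_le_mul_of_nonneg_left (add_le_add (aux_sup x y) (aux_sup z y)) hD0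
    _ ≤ ENNReal.ofReal D * (M + M) := by
        rw [eLpNorm_const_smul, Real.enorm_eq_ofReal hD0]
        gcongr
        refine (eLpNorm_add_le (hm x).aestronglyMeasurable (hm z).aestronglyMeasurable ?_).trans
          (add_le_add (aux_norm _ x hx) (aux_norm _ z hz))
        rw [ENNReal.one_le_ofReal]; linarith
    _ ≤ _ := by
        rw [← ENNReal.ofReal_toReal hM.ne, ← ENNReal.ofReal_add (by positivity) (by positivity),
          ← ENNReal.ofReal_mul hD0]
        apply ENNReal.ofReal_le_ofReal
        rw [ENNReal.toReal_ofReal (by positivity)]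
        nlinarith
end
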